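/- Let d ≥ 2 be an integer, let C > 0, let 1 ≤ p ≤ q ≤ r < ∞ with 1 + (d−1)/q > d/p, and let A > 0. Let S_0 = {z ∈ ℝ^d : 1/2 < z·e_d ≤ 1}. Suppose that ‖T[f]‖_{L^q(L^r),N} ≤ A ‖f‖_{L^p(ℝ^d)} for every nonnegative measurable f supported in S_0. Then there is a constant A' > 0 (depending only on d, p, q, r, C, A) such that ‖T[f]‖_{L^q(L^r),N} ≤ A' ‖f‖_{L^p(ℝ^d)} for every nonnegative measurable function f on ℝ^d. -/

import Mathlib

/-!
Cut `T[f]` into its contributions from the dyadic slabs `{c / 2 < z·e_d ≤ c}` with `c = 2^{-k}`.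
Dilating the slab by `c⁻¹` carries it to `S₀`, so its contribution obeys the assumed bound with an
extra factor `c ^ (1 + n / q - (n + 1) / p)`, where `n = d - 1`: one power of `c` comes from `dt`,
`c ^ (n / q)` from the norm in `x`, and `c ^ (-(n + 1) / p)` from `‖f‖_p`; the variable `ξ` does not
scale. The exponent is positive, so the contributions sum geometrically. Raising the mixed norm to
the power `s = min(1, q, r)` makes it countably subadditive, whether or not `q` and `r` are at
least `1`.
-/

open MeasureTheory ENNReal

noncomputable section

/-- `ℝ^n` with the Euclidean structure. We model `ℝ^d` as `Euc (d-1) × ℝ`, the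
second coordinate being the `e_d` coordinate. -/
abbrev Euc (n : ℕ) := EuclideanSpace ℝ (Fin n)

/-- The local x-ray transform: `T[f](ξ,x) = ∫_0^1 f (x + t(ξ + e_d)) dt`. -/
def xrayT {n : ℕ} (f : Euc n × ℝ → ℝ≥0∞) (ξ x : Euc n) : ℝ≥0∞ :=
  ∫⁻ t in Set.Ioc (0:ℝ) 1, f (x + t • ξ, t)

/-- The Nikodym-order mixed norm `‖T[f]‖_{L^q(L^r),N}`. -/
def nikodymMixedNorm {n : ℕ} (q r C : ℝ) (f : Euc n × ℝ → ℝ≥0∞) : ℝ≥0∞ :=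
  (∫⁻ x : Euc n, (∫⁻ ξ in Metric.ball (0 : Euc n) C, xrayT f ξ x ^ r) ^ (q / r)) ^ (1 / q)

/-- The slab `S₀ = {z ∈ ℝ^d : 1/2 < z·e_d ≤ 1}`. -/
def S₀ (n : ℕ) : Set (Euc n × ℝ) := {z | 1/2 < z.2 ∧ z.2 ≤ 1}

section Subadditivity

lemma iSup_rpow {ι : Sort*} (a : ι → ℝ≥0∞) {s : ℝ} (hs : 0 < s) :
    (⨆ i, a i) ^ s = ⨆ i, a i ^ s :=
  (ENNReal.orderIsoRpow s hs).map_iSup a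

lemma tsum_rpow_le_tsum_rpow {ι : Type*} (a : ι → ℝ≥0∞) {s : ℝ} (hs : 0 < s) (hs1 : s ≤ 1) :
    (∑' i, a i) ^ s ≤ ∑' i, a i ^ s := by
  rw [ENNReal.tsum_eq_iSup_sum, iSup_rpow _ hs]
  refine iSup_le fun t => le_trans ?_ (ENNReal.sum_le_tsum t)
  exact Finset.le_sum_of_subadditive (· ^ s) (ENNReal.zero_rpow_of_pos hs).le
    (fun x y => ENNReal.rpow_add_le_add_rpow x y hs.le hs1) t a

variable {ι α β : Type*} [Countable ι] [MeasurableSpace α] [MeasurableSpace β]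
  {μ : Measure α} {ν : Measure β}

lemma eLpNorm'_tsum_le {F : ι → α → ℝ≥0∞} (hF : ∀ i, AEMeasurable (F i) μ) {p : ℝ} (hp : 1 ≤ p) :
    eLpNorm' (fun x => ∑' i, F i x) p μ ≤ ∑' i, eLpNorm' (F i) p μ := by
  have hp0 : 0 < p := one_pos.trans_le hp
  have eLpNorm'_tsum : eLpNorm' (fun x => ∑' i, F i x) p μ =
      ⨆ t : Finset ι, eLpNorm' (∑ i ∈ t, F i) p μ := by
    simp only [eLpNorm', enorm_eq_self, ENNReal.tsum_eq_iSup_sum, iSup_rpow _ hp0,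
      Finset.sum_apply]
    rw [lintegral_iSup_directed, iSup_rpow _ (one_div_pos.2 hp0)]
    · exact fun t => (t.aemeasurable_fun_sum fun i _ => hF i).pow_const p
    · refine directed_of_isDirected_le fun t u htu x => ?_
      dsimp only
      gcongr
  rw [eLpNorm'_tsum]
  refine iSup_le fun t => le_trans ?_ (ENNReal.sum_le_tsum t)
  exact eLpNorm'_sum_le (fun i _ => (hF i).aestronglyMeasurable) hp

lemma eLpNorm'_rpow_le_tsum {G : α → ℝ≥0∞} {F : ι → α → ℝ≥0∞} (hF : ∀ i, AEMeasurable (F i) μ)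
    {p s : ℝ} (hs : 0 < s) (hsp : s ≤ p) (hG : ∀ x, G x ^ s ≤ ∑' i, F i x ^ s) :
    eLpNorm' G p μ ^ s ≤ ∑' i, eLpNorm' (F i) p μ ^ s := by
  have eLpNorm'_rpow (H : α → ℝ≥0∞) :
      eLpNorm' H p μ ^ s = eLpNorm' (fun x => H x ^ s) (p / s) μ := by
    simpa [hs.ne'] using (eLpNorm'_enorm_rpow (μ := μ) H (p / s) s hs).symm
  simp only [eLpNorm'_rpow]
  calc eLpNorm' (fun x => G x ^ s) (p / s) μ
      ≤ eLpNorm' (fun x => ∑' i, F i x ^ s) (p / s) μ :=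
        eLpNorm'_mono_enorm_ae (div_nonneg (hs.le.trans hsp) hs.le) (.of_forall hG)
    _ ≤ _ := eLpNorm'_tsum_le (fun i => (hF i).pow_const s) ((one_le_div hs).2 hsp)

/-- The mixed norm `‖F‖_{L^q(μ; L^r(ν))}` of a nonnegative function of two variables: `L^r` in the
second variable, then `L^q` in the first. -/
def mixedNorm (q r : ℝ) (μ : Measure α) (ν : Measure β) (F : α → β → ℝ≥0∞) : ℝ≥0∞ :=
  eLpNorm' (fun x => eLpNorm' (F x) r ν) q μ

lemma mixedNorm_rpow_le_tsum [SFinite ν] {G : α → β → ℝ≥0∞} {F : ι → α → β → ℝ≥0∞}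
    (hF : ∀ i, Measurable (Function.uncurry (F i))) {q r s : ℝ} (hs : 0 < s) (hsq : s ≤ q)
    (hsr : s ≤ r) (hG : ∀ x y, G x y ^ s ≤ ∑' i, F i x y ^ s) :
    mixedNorm q r μ ν G ^ s ≤ ∑' i, mixedNorm q r μ ν (F i) ^ s := by
  refine eLpNorm'_rpow_le_tsum (fun i => ?_) hs hsq fun x =>
    eLpNorm'_rpow_le_tsum (fun i => (hF i).of_uncurry_left.aemeasurable) hs hsr (hG x)
  exact (((hF i).pow_const r).lintegral_prod_right'.pow_const (1 / r)).aemeasurable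

end Subadditivity

section Scaling

lemma eLpNorm'_const_mul {α : Type*} [MeasurableSpace α] {μ : Measure α} {a : ℝ≥0∞} (ha : a ≠ ∞)
    (F : α → ℝ≥0∞) {p : ℝ} (hp : 0 < p) :
    eLpNorm' (fun x => a * F x) p μ = a * eLpNorm' F p μ := by
  simp only [eLpNorm', enorm_eq_self, ENNReal.mul_rpow_of_nonneg _ _ hp.le]
  rw [lintegral_const_mul' _ _ (ENNReal.rpow_ne_top_of_nonneg hp.le ha),
    ENNReal.mul_rpow_of_nonneg _ _ (one_div_pos.2 hp).le, ← ENNReal.rpow_mul,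
    mul_one_div_cancel hp.ne', ENNReal.rpow_one]

lemma mixedNorm_const_mul {α β : Type*} [MeasurableSpace α] [MeasurableSpace β] {μ : Measure α}
    {ν : Measure β} {a : ℝ≥0∞} (ha : a ≠ ∞) (F : α → β → ℝ≥0∞) {q r : ℝ} (hq : 0 < q)
    (hr : 0 < r) :
    mixedNorm q r μ ν (fun x y => a * F x y) = a * mixedNorm q r μ ν F := by
  simp only [mixedNorm, eLpNorm'_const_mul ha _ hr, eLpNorm'_const_mul ha _ hq]

variable {E : Type*} [NormedAddCommGroup E] [NormedSpace ℝ E] [MeasurableSpace E] [BorelSpace E]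
  [FiniteDimensional ℝ E] (μ : Measure E) [μ.IsAddHaarMeasure] {c : ℝ}

lemma lintegral_comp_smul (hc : 0 < c) (h : E → ℝ≥0∞) :
    ∫⁻ x, h (c • x) ∂μ = ENNReal.ofReal c ^ (-(Module.finrank ℝ E : ℝ)) * ∫⁻ x, h x ∂μ := by
  rw [← (measurableEmbedding_const_smul₀ hc.ne').lintegral_map, Measure.map_addHaar_smul μ hc.ne',
    lintegral_smul_measure, smul_eq_mul, abs_of_pos (by positivity),
    ENNReal.ofReal_inv_of_pos (by positivity), ENNReal.ofReal_pow hc.le, ENNReal.rpow_neg,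
    ENNReal.rpow_natCast]

lemma eLpNorm'_comp_smul (hc : 0 < c) (F : E → ℝ≥0∞) {p : ℝ} (hp : 0 ≤ p) :
    eLpNorm' (fun x => F (c • x)) p μ =
      ENNReal.ofReal c ^ (-(Module.finrank ℝ E / p : ℝ)) * eLpNorm' F p μ := by
  simp only [eLpNorm', enorm_eq_self]
  rw [lintegral_comp_smul μ hc fun x => F x ^ p,
    ENNReal.mul_rpow_of_nonneg _ _ (one_div_nonneg.2 hp), ← ENNReal.rpow_mul, ← neg_div,
    mul_one_div]

lemma mixedNorm_comp_smul {β : Type*} [MeasurableSpace β] (ν : Measure β) (hc : 0 < c)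
    (F : E → β → ℝ≥0∞) {q r : ℝ} (hq : 0 ≤ q) :
    mixedNorm q r μ ν (fun x => F (c • x)) =
      ENNReal.ofReal c ^ (-(Module.finrank ℝ E / q : ℝ)) * mixedNorm q r μ ν F :=
  eLpNorm'_comp_smul μ hc (fun x => eLpNorm' (F x) r ν) hq

lemma setLIntegral_Ioc_mul_left (hc : 0 < c) (a b : ℝ) (h : ℝ → ℝ≥0∞) :
    ∫⁻ t in Set.Ioc (c * a) (c * b), h t =
      ENNReal.ofReal c * ∫⁻ t in Set.Ioc a b, h (c * t) := by
  have indicator_dilate : (Set.Ioc a b).indicator (fun t => h (c * t)) =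
      fun t => (Set.Ioc (c * a) (c * b)).indicator h (c • t) := by
    ext t
    simp [Set.indicator, mul_lt_mul_iff_right₀ hc, mul_le_mul_iff_right₀ hc]
  rw [← lintegral_indicator measurableSet_Ioc, ← lintegral_indicator measurableSet_Ioc,
    indicator_dilate, lintegral_comp_smul volume hc, ← mul_assoc, Module.finrank_self,
    Nat.cast_one, ENNReal.rpow_neg_one,
    ENNReal.mul_inv_cancel (ENNReal.ofReal_pos.2 hc).ne' ENNReal.ofReal_ne_top, one_mul]

end Scaling

section GeometricSeries

lemma tsum_ofReal_half_pow_rpow {a : ℝ} (ha : 0 < a) :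
    ∑' k : ℕ, ENNReal.ofReal (2⁻¹ ^ k) ^ a = ENNReal.ofReal (1 - 2⁻¹ ^ a)⁻¹ := by
  have hratio0 : (0 : ℝ) ≤ 2⁻¹ ^ a := by positivity
  have hratio1 : (2⁻¹ : ℝ) ^ a < 1 := Real.rpow_lt_one (by norm_num) (by norm_num) ha
  have hterm (k : ℕ) : ENNReal.ofReal (2⁻¹ ^ k) ^ a = ENNReal.ofReal ((2⁻¹ ^ a) ^ k) := by
    rw [ENNReal.ofReal_rpow_of_nonneg (by positivity) ha.le, Real.rpow_pow_comm (by norm_num)]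
  simp only [hterm]
  rw [← ENNReal.ofReal_tsum_of_nonneg (fun k => pow_nonneg hratio0 k)
    (summable_geometric_of_lt_one hratio0 hratio1), tsum_geometric_of_lt_one hratio0 hratio1]

lemma exists_le_mul_of_rpow_le_tsum_half_pow {a s : ℝ} (ha : 0 < a) (hs : 0 < s) :
    ∃ K : ℝ, 0 < K ∧ ∀ x y : ℝ≥0∞,
      x ^ s ≤ ∑' k : ℕ, (ENNReal.ofReal (2⁻¹ ^ k) ^ a * y) ^ s → x ≤ ENNReal.ofReal K * y := by
  have hratio : (2⁻¹ : ℝ) ^ (a * s) < 1 :=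
    Real.rpow_lt_one (by norm_num) (by norm_num) (mul_pos ha hs)
  have hsum_pos : 0 < (1 - (2⁻¹ : ℝ) ^ (a * s))⁻¹ := inv_pos.2 (sub_pos.2 hratio)
  refine ⟨(1 - 2⁻¹ ^ (a * s))⁻¹ ^ s⁻¹, Real.rpow_pos_of_pos hsum_pos _, fun x y hxy => ?_⟩
  have hxs : x ^ s ≤ ENNReal.ofReal (1 - 2⁻¹ ^ (a * s))⁻¹ * y ^ s := by
    simpa only [ENNReal.mul_rpow_of_nonneg _ _ hs.le, ← ENNReal.rpow_mul, ENNReal.tsum_mul_right,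
      tsum_ofReal_half_pow_rpow (mul_pos ha hs)] using hxy
  calc x ≤ (ENNReal.ofReal (1 - 2⁻¹ ^ (a * s))⁻¹ * y ^ s) ^ s⁻¹ :=
        (ENNReal.le_rpow_inv_iff hs).2 hxs
    _ = _ := by
        rw [ENNReal.mul_rpow_of_nonneg _ _ (inv_pos.2 hs).le, ENNReal.rpow_rpow_inv hs.ne',
          ENNReal.ofReal_rpow_of_pos hsum_pos]

end GeometricSeries

section XrayTransform

variable {n : ℕ} {f : Euc n × ℝ → ℝ≥0∞} {c p q r C : ℝ}

lemma measurableSet_S₀ (n : ℕ) : MeasurableSet (S₀ n) :=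
  measurable_snd measurableSet_Ioc

/-- The restriction of `f` to the slab `{c / 2 < z·e_d ≤ c}`, dilated by `c⁻¹` so that it lives on
`S₀`. -/
def rescaledSlab (f : Euc n × ℝ → ℝ≥0∞) (c : ℝ) : Euc n × ℝ → ℝ≥0∞ :=
  (S₀ n).indicator fun z => f (c • z)

lemma measurable_rescaledSlab (hf : Measurable f) (c : ℝ) : Measurable (rescaledSlab f c) :=
  (hf.comp (measurable_const_smul c)).indicator (measurableSet_S₀ n)

/-- The part of `T[f](ξ,x)` coming from the slab `{c / 2 < z·e_d ≤ c}`. -/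
def slabXrayT (f : Euc n × ℝ → ℝ≥0∞) (c : ℝ) (ξ x : Euc n) : ℝ≥0∞ :=
  ∫⁻ t in Set.Ioc (c / 2) c, f (x + t • ξ, t)

lemma measurable_uncurry_slabXrayT (hf : Measurable f) (c : ℝ) :
    Measurable (Function.uncurry fun x ξ : Euc n => slabXrayT f c ξ x) := by
  have hline : Measurable fun w : (Euc n × Euc n) × ℝ => f (w.1.1 + w.2 • w.1.2, w.2) :=
    hf.comp (by fun_prop)
  exact hline.lintegral_prod_right'

lemma slabXrayT_eq_mul_xrayT_rescaledSlab (hc : 0 < c) (f : Euc n × ℝ → ℝ≥0∞) (ξ x : Euc n) :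
    slabXrayT f c ξ x = ENNReal.ofReal c * xrayT (rescaledSlab f c) ξ (c⁻¹ • x) := by
  have hslab (t : ℝ) : rescaledSlab f c (c⁻¹ • x + t • ξ, t) =
      (Set.Ioc (1 / 2) 1).indicator (fun t => f (x + (c * t) • ξ, c * t)) t := by
    simp [rescaledSlab, S₀, Set.indicator, smul_smul, hc.ne']
  have hIoc : Set.Ioc (0 : ℝ) 1 ∩ Set.Ioc (1 / 2) 1 = Set.Ioc (1 / 2) 1 :=
    Set.inter_eq_right.2 (Set.Ioc_subset_Ioc_left (by norm_num))
  have hchange := setLIntegral_Ioc_mul_left hc (1 / 2) 1 fun t => f (x + t • ξ, t)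
  rw [mul_one, mul_one_div] at hchange
  simp only [slabXrayT, xrayT, hslab]
  rw [setLIntegral_indicator measurableSet_Ioc, Set.inter_comm, hIoc, hchange]

lemma Ioc_zero_one_subset_iUnion_Ioc_half_pow :
    Set.Ioc (0 : ℝ) 1 ⊆ ⋃ k : ℕ, Set.Ioc (2⁻¹ ^ k / 2) (2⁻¹ ^ k) := by
  rintro t ⟨ht0, ht1⟩
  obtain ⟨k, hlt, hle⟩ := exists_nat_pow_near_of_lt_one ht0 ht1
    (show (0 : ℝ) < 2⁻¹ by norm_num) (by norm_num)
  exact Set.mem_iUnion.2 ⟨k, by rwa [div_eq_mul_inv, ← pow_succ], hle⟩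

lemma xrayT_le_tsum_slabXrayT (f : Euc n × ℝ → ℝ≥0∞) (ξ x : Euc n) :
    xrayT f ξ x ≤ ∑' k : ℕ, slabXrayT f (2⁻¹ ^ k) ξ x :=
  (lintegral_mono_set Ioc_zero_one_subset_iUnion_Ioc_half_pow).trans (lintegral_iUnion_le _ _)

lemma eLpNorm'_rescaledSlab_le (f : Euc n × ℝ → ℝ≥0∞) (hc : 0 < c) (hp : 0 ≤ p) :
    eLpNorm' (rescaledSlab f c) p volume ≤
      ENNReal.ofReal c ^ (-((n + 1) / p)) * eLpNorm' f p volume := by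
  have : (volume : Measure (Euc n × ℝ)).IsAddHaarMeasure :=
    Measure.prod.instIsAddHaarMeasure volume volume
  calc eLpNorm' (rescaledSlab f c) p volume
      ≤ eLpNorm' (fun z => f (c • z)) p volume :=
        eLpNorm'_mono_enorm_ae hp (.of_forall (Set.indicator_le_self _ _))
    _ = _ := by
        rw [eLpNorm'_comp_smul volume hc f hp]
        simp

lemma nikodymMixedNorm_eq_mixedNorm (f : Euc n × ℝ → ℝ≥0∞) :
    nikodymMixedNorm q r C f =
      mixedNorm q r volume (volume.restrict (Metric.ball 0 C)) fun x ξ => xrayT f ξ x := by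
  simp only [nikodymMixedNorm, mixedNorm, eLpNorm', enorm_eq_self, ← ENNReal.rpow_mul,
    one_div_mul_eq_div]

lemma mixedNorm_slabXrayT_le (hp : 0 ≤ p) (hq : 0 < q) (hr : 0 < r) (hc : 0 < c)
    {A : ℝ≥0∞} (hbound : nikodymMixedNorm q r C (rescaledSlab f c) ≤
      A * eLpNorm' (rescaledSlab f c) p volume) :
    mixedNorm q r volume (volume.restrict (Metric.ball 0 C))
        (fun x ξ => slabXrayT f c ξ x) ≤
      ENNReal.ofReal c ^ (1 + n / q - (n + 1) / p) * (A * eLpNorm' f p volume) := by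
  have hc0 : ENNReal.ofReal c ≠ 0 := (ENNReal.ofReal_pos.2 hc).ne'
  have hc_top : ENNReal.ofReal c ≠ ∞ := ENNReal.ofReal_ne_top
  have dilate : mixedNorm q r volume (volume.restrict (Metric.ball 0 C))
      (fun x ξ => xrayT (rescaledSlab f c) ξ (c⁻¹ • x)) =
      ENNReal.ofReal c ^ (n / q) * nikodymMixedNorm q r C (rescaledSlab f c) := by
    rw [nikodymMixedNorm_eq_mixedNorm, mixedNorm_comp_smul volume _ (inv_pos.2 hc)
        (fun x ξ => xrayT (rescaledSlab f c) ξ x) hq.le,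
      ENNReal.ofReal_inv_of_pos hc, ENNReal.inv_rpow, ← ENNReal.rpow_neg, neg_neg,
      finrank_euclideanSpace_fin]
  simp only [slabXrayT_eq_mul_xrayT_rescaledSlab hc]
  rw [mixedNorm_const_mul hc_top _ hq hr, dilate]
  calc ENNReal.ofReal c * (ENNReal.ofReal c ^ (n / q) *
        nikodymMixedNorm q r C (rescaledSlab f c))
      ≤ ENNReal.ofReal c * (ENNReal.ofReal c ^ (n / q) *
        (A * (ENNReal.ofReal c ^ (-((n + 1) / p)) * eLpNorm' f p volume))) := by
        gcongr
        exact hbound.trans (by gcongr; exact eLpNorm'_rescaledSlab_le f hc hp)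
    _ = _ := by
        rw [sub_eq_add_neg, ENNReal.rpow_add _ _ hc0 hc_top, ENNReal.rpow_add _ _ hc0 hc_top,
          ENNReal.rpow_one]
        ring

lemma nikodymMixedNorm_rpow_le_tsum (hf : Measurable f) {s : ℝ} (hs : 0 < s) (hs1 : s ≤ 1)
    (hsq : s ≤ q) (hsr : s ≤ r) :
    nikodymMixedNorm q r C f ^ s ≤
      ∑' k : ℕ, mixedNorm q r volume (volume.restrict (Metric.ball 0 C))
        (fun x ξ => slabXrayT f (2⁻¹ ^ k) ξ x) ^ s := by
  rw [nikodymMixedNorm_eq_mixedNorm]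
  refine mixedNorm_rpow_le_tsum (fun k => measurable_uncurry_slabXrayT hf _) hs hsq hsr
    fun x ξ => ?_
  exact (ENNReal.rpow_le_rpow (xrayT_le_tsum_slabXrayT f ξ x) hs.le).trans
    (tsum_rpow_le_tsum_rpow _ hs hs1)

end XrayTransform

theorem statement19_general {n : ℕ} {p q r : ℝ} (hp : 0 < p) (hq : 0 < q) (hr : 0 < r)
    (hscaling : (n + 1) / p < 1 + n / q) :
    ∃ K : ℝ, 0 < K ∧ ∀ (C : ℝ) (A : ℝ≥0∞),
      (∀ f : Euc n × ℝ → ℝ≥0∞, Measurable f → (∀ z, z ∉ S₀ n → f z = 0) →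
        nikodymMixedNorm q r C f ≤ A * (∫⁻ z, f z ^ p) ^ (1 / p)) →
      ∀ f : Euc n × ℝ → ℝ≥0∞, Measurable f →
        nikodymMixedNorm q r C f ≤ ENNReal.ofReal K * A * (∫⁻ z, f z ^ p) ^ (1 / p) := by
  obtain ⟨s, hs, hs1, hsq, hsr⟩ : ∃ s : ℝ, 0 < s ∧ s ≤ 1 ∧ s ≤ q ∧ s ≤ r :=
    ⟨min 1 (min q r), by positivity, by simp, by simp, by simp⟩
  obtain ⟨K, hK, le_mul_of_geometric⟩ :=
    exists_le_mul_of_rpow_le_tsum_half_pow (sub_pos.2 hscaling) hs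
  refine ⟨K, hK, fun C A hbound f hf => ?_⟩
  rw [mul_assoc]
  refine le_mul_of_geometric _ _ ((nikodymMixedNorm_rpow_le_tsum hf hs hs1 hsq hsr).trans ?_)
  gcongr with k
  exact mixedNorm_slabXrayT_le hp.le hq hr (by positivity) <|
    hbound _ (measurable_rescaledSlab hf _) fun z hz => Set.indicator_of_notMem hz _

/-- If the Nikodym-order mixed norm bound holds for all nonnegative measurable `f`
supported in the slab `S₀`, and `1 + (d-1)/q > d/p`, then it holds (with a
different constant) for all nonnegative measurable `f`. -/
theorem statement19 (d : ℕ) (hd : 2 ≤ d) (C : ℝ) (hC : 0 < C) (p q r : ℝ)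
    (hp : 1 ≤ p) (hpq : p ≤ q) (hqr : q ≤ r)
    (hscaling : 1 + ((d:ℝ) - 1) / q > (d:ℝ) / p)
    (A : ℝ) (hA : 0 < A)
    (hbound : ∀ f : Euc (d - 1) × ℝ → ℝ≥0∞, Measurable f →
      (∀ z, z ∉ S₀ (d - 1) → f z = 0) →
      nikodymMixedNorm q r C f ≤ ENNReal.ofReal A * (∫⁻ z, f z ^ p) ^ (1 / p)) :
    ∃ A' : ℝ, 0 < A' ∧ ∀ f : Euc (d - 1) × ℝ → ℝ≥0∞, Measurable f →
      nikodymMixedNorm q r C f ≤ ENNReal.ofReal A' * (∫⁻ z, f z ^ p) ^ (1 / p) := by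
  obtain ⟨K, hK, hextend⟩ := statement19_general (n := d - 1) (by linarith : 0 < p)
    (by linarith : 0 < q) (by linarith : 0 < r)
    (by simpa [Nat.cast_sub (one_le_two.trans hd)] using hscaling)
  exact ⟨K * A, mul_pos hK hA,
    by simpa only [ENNReal.ofReal_mul hK.le] using hextend C (ENNReal.ofReal A) hbound⟩

end
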